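/- (Formula (6) and skew-symmetry of ∇J) Let n ∈ Im(Ca') with g(n,n) = 1, and for A, B ∈ Im(Ca') tangent at n (g(A,n) = g(B,n) = 0) define (∇_A J)B := A×B − g(A×B, n)·n (the covariant derivative of the Cayley almost complex structure J X := n×X on S^{2,4}, obtained by orthogonal projection of A×B to the tangent space). Then (∇_A J)A = 0 for every tangent A (the nearly pseudo-Kähler property), and (∇_{JA} J)B = −J((∇_A J)B) for all tangent A, B. -/

import Mathlib

-- The split octonion algebra Ca' as pairs of real quaternions.
noncomputable section

abbrev Ca : Type := Quaternion ℝ × Quaternion ℝ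

namespace Ca

/-- Split octonion multiplication: (a,b)·(c,d) = (ac + (conj d)b, da + b(conj c)). -/
def mul (x y : Ca) : Ca :=
  (x.1 * y.1 + star y.2 * x.2, y.2 * x.1 + x.2 * star y.1)

/-- The unit (1,0). -/
def one : Ca := (1, 0)

/-- Conjugation conj(a,b) = (conj a, −b). -/
def conj (x : Ca) : Ca := (star x.1, -x.2)

/-- Real part Re(a,b) = re a. -/
def re (x : Ca) : ℝ := x.1.re

/-- Norm form N(a,b) = ‖a‖² − ‖b‖², of signature (4,4). -/
def N (x : Ca) : ℝ := Quaternion.normSq x.1 - Quaternion.normSq x.2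

/-- The symmetric bilinear form ⟨x,y⟩ = (N(x+y) − N(x) − N(y))/2. -/
def bil (x y : Ca) : ℝ := (N (x + y) - N x - N y) / 2

/-- The vector cross product on Im(Ca'): X × Y := X·Y + g(X,Y)·1. -/
def cross (X Y : Ca) : Ca := mul X Y + bil X Y • one

end Ca

/-- The covariant derivative of the Cayley almost complex structure on S^{2,4}:
(∇_A J)B = A×B − g(A×B,n)·n. -/
def nablaJ (n A B : Ca) : Ca := Ca.cross A B - Ca.bil (Ca.cross A B) n • n

/-- The Cayley almost complex structure J X = n×X. -/
def Jmap (n X : Ca) : Ca := Ca.cross n X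

open scoped Quaternion

theorem Ca.bil_eq (x y : Ca) : Ca.bil x y =
    x.1.re * y.1.re + x.1.imI * y.1.imI + x.1.imJ * y.1.imJ + x.1.imK * y.1.imK
    - (x.2.re * y.2.re + x.2.imI * y.2.imI + x.2.imJ * y.2.imJ + x.2.imK * y.2.imK) := by
  simp only [Ca.bil, Ca.N, Quaternion.normSq_def', Prod.fst_add, Prod.snd_add,
    Quaternion.re_add, Quaternion.imI_add, Quaternion.imJ_add, Quaternion.imK_add]
  ring

theorem Ca.bil_smul_right (c : ℝ) (x y : Ca) : Ca.bil x (c • y) = c * Ca.bil x y := by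
  simp [Ca.bil_eq]
  ring

theorem Ca.bil_sub_right (x y z : Ca) : Ca.bil x (y - z) = Ca.bil x y - Ca.bil x z := by
  simp [Ca.bil_eq]
  ring

theorem Ca.mul_smul_right (c : ℝ) (x y : Ca) : Ca.mul x (c • y) = c • Ca.mul x y := by
  simp [Ca.mul]

theorem Ca.mul_sub_right (x y z : Ca) : Ca.mul x (y - z) = Ca.mul x y - Ca.mul x z := by
  simp only [Ca.mul, Prod.fst_sub, Prod.snd_sub, star_sub, mul_sub, sub_mul, Prod.mk_sub_mk]
  ext1 <;> simp only [] <;> abel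

theorem Ca.cross_sub_smul (c : ℝ) (x y z : Ca) :
    Ca.cross x (y - c • z) = Ca.cross x y - c • Ca.cross x z := by
  simp only [Ca.cross, Ca.mul_sub_right, Ca.mul_smul_right, Ca.bil_sub_right, Ca.bil_smul_right]
  module

theorem Ca.ext_coords (x y : Ca) (h1 : x.1.re = y.1.re) (h2 : x.1.imI = y.1.imI)
    (h3 : x.1.imJ = y.1.imJ) (h4 : x.1.imK = y.1.imK) (h5 : x.2.re = y.2.re)
    (h6 : x.2.imI = y.2.imI) (h7 : x.2.imJ = y.2.imJ) (h8 : x.2.imK = y.2.imK) : x = y :=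
  Prod.ext (Quaternion.ext _ _ h1 h2 h3 h4) (Quaternion.ext _ _ h5 h6 h7 h8)

/-- The cross product of an imaginary element with itself vanishes. -/
theorem Ca.cross_self (x : Ca) (hx : Ca.re x = 0) : Ca.cross x x = 0 := by
  simp only [Ca.re] at hx
  apply Ca.ext_coords <;> simp [Ca.cross, Ca.bil_eq, Ca.mul, Ca.one, hx] <;> ring

set_option maxHeartbeats 2000000 in
/-- The double cross product identity. -/
theorem Ca.cross_cross (x y z : Ca) (hx : Ca.re x = 0) (hy : Ca.re y = 0) (hz : Ca.re z = 0) :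
    Ca.cross (Ca.cross x y) z = - Ca.cross x (Ca.cross y z)
      + ((2 * Ca.bil x z) • y - Ca.bil y x • z - Ca.bil y z • x) := by
  simp only [Ca.re] at hx hy hz
  apply Ca.ext_coords <;> simp [Ca.cross, Ca.bil_eq, Ca.mul, Ca.one, hx, hy, hz] <;> ring

set_option maxHeartbeats 2000000 in
theorem Ca.bil_cross_cross (x y z : Ca) (hx : Ca.re x = 0) (hy : Ca.re y = 0)
    (hz : Ca.re z = 0) :
    Ca.bil (Ca.cross (Ca.cross x y) z) x
      = Ca.bil y x * Ca.bil z x - Ca.bil y z * Ca.bil x x := by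
  simp only [Ca.re] at hx hy hz
  simp [Ca.cross, Ca.bil_eq, Ca.mul, Ca.one, hx, hy, hz]
  ring

theorem Ca.bil_comm (x y : Ca) : Ca.bil x y = Ca.bil y x := by
  simp only [Ca.bil_eq]
  ring

/-- Formula (6): (∇_A J)A = 0 (nearly pseudo-Kähler property) and
∇_{JA}J = −J∘∇_A J on S^{2,4}. -/
theorem nablaJ_properties (n : Ca) (hn : Ca.re n = 0) (hnn : Ca.bil n n = 1)
    (A B : Ca) (hA : Ca.re A = 0) (hB : Ca.re B = 0)
    (hAn : Ca.bil A n = 0) (hBn : Ca.bil B n = 0) :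
    nablaJ n A A = 0 ∧
    nablaJ n (Jmap n A) B = -(Jmap n (nablaJ n A B)) := by
  constructor
  · rw [nablaJ, Ca.cross_self A hA]
    simp [Ca.bil_eq]
  · have hnB : Ca.bil n B = 0 := by rw [Ca.bil_comm, hBn]
    rw [nablaJ, nablaJ, Jmap, Jmap, Ca.cross_sub_smul, Ca.cross_self n hn,
      Ca.bil_cross_cross n A B hn hA hB, Ca.cross_cross n A B hn hA hB, hAn, hBn, hnn, hnB]
    module
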